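/- Let L > 0, let g : (0, L) → [0, 1] be measurable, set v = √(2·∫_0^L ξ g(ξ) dξ), and assume v ≤ L. Let u ∈ [−L, L]. Then u :=BLN v holds if and only if there exists a measurable function h : (−L, 0) → [−1, 0] such that the function m : [−L, L] → ℝ defined by m(ξ) = ∫_{−L}^{ξ} ζ · (M(u, ζ) − g(ζ)·1_{{ζ > 0}} − h(ζ)·1_{{ζ < 0}}) dζ satisfies m(ξ) ≥ 0 for every ξ ∈ [−L, L] and m(L) = 0. -/

import Mathlib

/-!
Since `v ≥ 0`, the relation `BLN u v` says exactly that `u = v` or `u ≤ -v` (`BLN_iff`).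
Write `F ζ` for the integrand and `m` for its primitive. The first moments of the Maxwellian on
`(-L, 0)` and `(0, L)` are `(min u 0)² / 2` and `(max u 0)² / 2`, and that of `g` is `v² / 2`, so
`m L = (min u 0)² / 2 + (max u 0)² / 2 - ∫ ζ h - v² / 2` (`total_moment`), where `∫ ζ h ≥ 0`.

If `h` exists and `u < 0`, then `m L = 0` gives `u² ≥ v²`, so `u ≤ -v`. If `u ≥ 0`, then
`m 0 = -∫ ζ h ≤ 0`, so `m 0 ≥ 0` forces `∫ ζ h = 0` and `m L = 0` gives `u = v`.

Conversely, take `h = 0` when `u = v`, and `h = M(u, ·) - M(-v, ·)` when `u ≤ -v`. Then `m L = 0`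
and `F` changes sign only once, from nonnegative to nonpositive (at `v`, respectively at `0`),
so that `m` rises from `0` and then falls back to `0`; hence `m ≥ 0` (`primitive_nonneg`).
-/

open MeasureTheory Set Filter

/-- The Maxwellian `M(u, ξ)`: equals `1` on `0 < ξ < u`, `-1` on `u < ξ < 0`, `0` otherwise. -/
noncomputable def Mfun (u ξ : ℝ) : ℝ :=
  if 0 < ξ ∧ ξ < u then 1 else if u < ξ ∧ ξ < 0 then -1 else 0

/-- The Bardos–Leroux–Nédélec boundary relation `u :=BLN v`:
for every `k` between `u` and `v`, `(u²/2 - k²/2)·sign(u - v) ≤ 0`. -/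
def BLN (u v : ℝ) : Prop :=
  ∀ k : ℝ, min u v ≤ k → k ≤ max u v →
    (u ^ 2 / 2 - k ^ 2 / 2) * Real.sign (u - v) ≤ 0

theorem BLN_iff {u v : ℝ} (hv : 0 ≤ v) : BLN u v ↔ u = v ∨ u ≤ -v := by
  unfold BLN
  constructor
  · intro h
    have h1 := h v (min_le_right _ _) (le_max_right _ _)
    rcases lt_trichotomy u v with huv | huv | huv
    · rw [Real.sign_of_neg (by linarith)] at h1
      right
      by_contra! hc
      nlinarith
    · exact Or.inl huv
    · rw [Real.sign_of_pos (by linarith)] at h1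
      nlinarith
  · rintro (rfl | h) k hk1 hk2
    · simp
    · rw [min_eq_left (by linarith)] at hk1
      rw [max_eq_right (by linarith)] at hk2
      rcases eq_or_lt_of_le (show u ≤ v by linarith) with rfl | huv
      · simp
      · rw [Real.sign_of_neg (by linarith)]
        nlinarith

theorem measurable_Mfun (u : ℝ) : Measurable (Mfun u) := by
  unfold Mfun
  refine Measurable.ite ?_ measurable_const (Measurable.ite ?_ measurable_const measurable_const)
  · exact measurableSet_Ioo
  · exact measurableSet_Ioo

theorem abs_Mfun_le (u ξ : ℝ) : |Mfun u ξ| ≤ 1 := by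
  unfold Mfun
  split_ifs <;> simp

/-- Equality on the open interval suffices: endpoints are null. -/
theorem integral_congr_open {a b : ℝ} (hab : a ≤ b) {f₁ f₂ : ℝ → ℝ}
    (h : ∀ x ∈ Ioo a b, f₁ x = f₂ x) : ∫ x in a..b, f₁ x = ∫ x in a..b, f₂ x := by
  rw [intervalIntegral.integral_of_le hab, intervalIntegral.integral_of_le hab,
    integral_Ioc_eq_integral_Ioo, integral_Ioc_eq_integral_Ioo]
  exact setIntegral_congr_fun measurableSet_Ioo h

theorem integral_nonneg_open {a b : ℝ} (hab : a ≤ b) {f : ℝ → ℝ}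
    (h : ∀ x ∈ Ioo a b, 0 ≤ f x) : 0 ≤ ∫ x in a..b, f x := by
  rw [intervalIntegral.integral_of_le hab, integral_Ioc_eq_integral_Ioo]
  exact setIntegral_nonneg measurableSet_Ioo h

theorem integral_nonpos_open {a b : ℝ} (hab : a ≤ b) {f : ℝ → ℝ}
    (h : ∀ x ∈ Ioo a b, f x ≤ 0) : ∫ x in a..b, f x ≤ 0 := by
  rw [intervalIntegral.integral_of_le hab, integral_Ioc_eq_integral_Ioo]
  exact setIntegral_nonpos measurableSet_Ioo h

theorem intervalIntegrable_moment {a b : ℝ} (hab : a ≤ b) {φ : ℝ → ℝ} (hφ : Measurable φ)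
    {C : ℝ} (h : ∀ x ∈ Ioo a b, |φ x| ≤ C) :
    IntervalIntegrable (fun x => x * φ x) volume a b := by
  have h1 : IntervalIntegrable φ volume a b := by
    rw [intervalIntegrable_iff_integrableOn_Ioo_of_le hab]
    refine Measure.integrableOn_of_bounded (M := C) (by simp) hφ.aestronglyMeasurable ?_
    exact (ae_restrict_iff' measurableSet_Ioo).2 (Eventually.of_forall h)
  exact h1.continuousOn_mul continuousOn_id

theorem intervalIntegrable_Mfun (u : ℝ) {a b : ℝ} (hab : a ≤ b) :
    IntervalIntegrable (fun x => x * Mfun u x) volume a b :=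
  intervalIntegrable_moment hab (measurable_Mfun u) (fun x _ => abs_Mfun_le u x)

theorem moment_Mfun_pos {L u : ℝ} (hL : 0 < L) (huL : u ≤ L) :
    ∫ x in (0 : ℝ)..L, x * Mfun u x = (max u 0) ^ 2 / 2 := by
  have hm : max u 0 ≤ L := max_le huL hL.le
  have h0 : 0 ≤ max u 0 := le_max_right _ _
  rw [← intervalIntegral.integral_add_adjacent_intervals
    (intervalIntegrable_Mfun u h0) (intervalIntegrable_Mfun u hm),
    integral_congr_open (f₂ := fun x => x) h0, integral_congr_open (f₂ := fun _ => 0) hm]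
  · simp
  · rintro x ⟨hx1, hx2⟩
    have := le_max_left u 0
    simp [Mfun, show ¬ x < u by linarith, show ¬ x < 0 by linarith]
  · rintro x ⟨hx1, hx2⟩
    have : x < u := by
      rcases lt_max_iff.1 hx2 with h | h <;> linarith
    simp [Mfun, hx1, this]

theorem moment_Mfun_neg {L u : ℝ} (hL : 0 < L) (huL : -L ≤ u) :
    ∫ x in (-L)..0, x * Mfun u x = (min u 0) ^ 2 / 2 := by
  have hm : -L ≤ min u 0 := le_min huL (by linarith)
  have h0 : min u 0 ≤ 0 := min_le_right _ _
  rw [← intervalIntegral.integral_add_adjacent_intervals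
    (intervalIntegrable_Mfun u hm) (intervalIntegrable_Mfun u h0),
    integral_congr_open (f₂ := fun _ => 0) hm, integral_congr_open (f₂ := fun x => -x) h0]
  · rw [intervalIntegral.integral_neg, integral_id, intervalIntegral.integral_zero]
    ring
  · rintro x ⟨hx1, hx2⟩
    have : u < x := by
      rcases min_lt_iff.1 hx1 with h | h <;> linarith
    simp [Mfun, hx2, this, show ¬ 0 < x by linarith]
  · rintro x ⟨hx1, hx2⟩
    have := min_le_left u 0
    simp [Mfun, show ¬ u < x by linarith, show ¬ 0 < x by linarith]

/-- A primitive that vanishes at both ends and whose derivative changes sign once, from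
nonnegative to nonpositive, is nonnegative. -/
theorem primitive_nonneg {a b c : ℝ} {F : ℝ → ℝ}
    (hF : IntervalIntegrable F volume a b) (h1 : ∀ x ∈ Ioo a c, 0 ≤ F x)
    (h2 : ∀ x ∈ Ioo c b, F x ≤ 0) (h0 : ∫ x in a..b, F x = 0) :
    ∀ ξ ∈ Icc a b, 0 ≤ ∫ x in a..ξ, F x := by
  rintro ξ ⟨hξ1, hξ2⟩
  rcases le_total ξ c with h | h
  · exact integral_nonneg_open hξ1 fun x hx => h1 x ⟨hx.1, hx.2.trans_le h⟩
  · have hab : a ≤ b := hξ1.trans hξ2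
    have i1 : IntervalIntegrable F volume a ξ :=
      hF.mono_set (by rw [uIcc_of_le hξ1, uIcc_of_le hab]; exact Icc_subset_Icc_right hξ2)
    have i2 : IntervalIntegrable F volume ξ b :=
      hF.mono_set (by rw [uIcc_of_le hξ2, uIcc_of_le hab]; exact Icc_subset_Icc_left hξ1)
    have e := intervalIntegral.integral_add_adjacent_intervals i1 i2
    have := integral_nonpos_open hξ2 fun x hx => h2 x ⟨h.trans_lt hx.1, hx.2⟩
    linarith

/-- The integrand `ζ (M(u, ζ) - g(ζ) 1_{ζ > 0} - h(ζ) 1_{ζ < 0})`. -/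
noncomputable def integrand (u : ℝ) (g h : ℝ → ℝ) (ζ : ℝ) : ℝ :=
  ζ * (Mfun u ζ - (if 0 < ζ then g ζ else 0) - (if ζ < 0 then h ζ else 0))

section

variable {L u : ℝ} {g h : ℝ → ℝ}

theorem integrable_integrand (hL : 0 < L) (hgm : Measurable g)
    (hg : ∀ ξ ∈ Ioo (0 : ℝ) L, g ξ ∈ Icc (0 : ℝ) 1) (hhm : Measurable h)
    (hh : ∀ ξ ∈ Ioo (-L) (0 : ℝ), h ξ ∈ Icc (-1 : ℝ) 0) :
    IntervalIntegrable (integrand u g h) volume (-L) L := by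
  refine intervalIntegrable_moment (C := 3) (by linarith) (((measurable_Mfun u).sub
    (Measurable.ite measurableSet_Ioi hgm measurable_const)).sub
    (Measurable.ite measurableSet_Iio hhm measurable_const)) ?_
  rintro x ⟨hx1, hx2⟩
  have := abs_le.1 (abs_Mfun_le u x)
  rw [abs_le]
  split_ifs with h1 h2 h2
  · linarith
  · have := hg x ⟨h1, hx2⟩
    constructor <;> linarith [this.1, this.2]
  · have := hh x ⟨hx1, h2⟩
    constructor <;> linarith [this.1, this.2]
  · constructor <;> linarith

theorem left_moment (hL : 0 < L) (hu : -L ≤ u) (hhm : Measurable h)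
    (hh : ∀ ξ ∈ Ioo (-L) (0 : ℝ), h ξ ∈ Icc (-1 : ℝ) 0) :
    ∫ x in (-L)..0, integrand u g h x = (min u 0) ^ 2 / 2 - ∫ x in (-L)..0, x * h x := by
  rw [← moment_Mfun_neg hL hu, ← intervalIntegral.integral_sub
    (intervalIntegrable_Mfun u (by linarith)) (intervalIntegrable_moment (C := 1) (by linarith) hhm
      fun x hx => abs_le.2 ⟨(hh x hx).1, (hh x hx).2.trans zero_le_one⟩)]
  refine integral_congr_open (by linarith) fun x hx => ?_
  simp [integrand, hx.2, hx.2.le.not_gt]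
  ring

theorem right_moment (hL : 0 < L) (hu : u ≤ L) (hgm : Measurable g)
    (hg : ∀ ξ ∈ Ioo (0 : ℝ) L, g ξ ∈ Icc (0 : ℝ) 1) :
    ∫ x in (0 : ℝ)..L, integrand u g h x =
      (max u 0) ^ 2 / 2 - ∫ x in (0 : ℝ)..L, x * g x := by
  rw [← moment_Mfun_pos hL hu, ← intervalIntegral.integral_sub
    (intervalIntegrable_Mfun u hL.le) (intervalIntegrable_moment (C := 1) hL.le hgm
      fun x hx => abs_le.2 ⟨by linarith [(hg x hx).1], (hg x hx).2⟩)]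
  refine integral_congr_open hL.le fun x hx => ?_
  simp [integrand, hx.1, hx.1.le.not_gt]
  ring

theorem total_moment (hL : 0 < L) (hu : u ∈ Icc (-L) L) (hgm : Measurable g)
    (hg : ∀ ξ ∈ Ioo (0 : ℝ) L, g ξ ∈ Icc (0 : ℝ) 1) (hhm : Measurable h)
    (hh : ∀ ξ ∈ Ioo (-L) (0 : ℝ), h ξ ∈ Icc (-1 : ℝ) 0) :
    ∫ x in (-L)..L, integrand u g h x =
      (min u 0) ^ 2 / 2 - (∫ x in (-L)..0, x * h x) +
        ((max u 0) ^ 2 / 2 - ∫ x in (0 : ℝ)..L, x * g x) := by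
  have hF := integrable_integrand (u := u) hL hgm hg hhm hh
  rw [← left_moment (g := g) hL hu.1 hhm hh, ← right_moment (h := h) hL hu.2 hgm hg]
  refine (intervalIntegral.integral_add_adjacent_intervals (hF.mono_set ?_)
    (hF.mono_set ?_)).symm
  · rw [uIcc_of_le (by linarith), uIcc_of_le (by linarith)]
    exact Icc_subset_Icc_right hL.le
  · rw [uIcc_of_le hL.le, uIcc_of_le (by linarith)]
    exact Icc_subset_Icc_left (by linarith)

end

theorem stmt17 (L : ℝ) (hL : 0 < L) (g : ℝ → ℝ) (hgm : Measurable g)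
    (hg01 : ∀ ξ ∈ Set.Ioo (0 : ℝ) L, g ξ ∈ Set.Icc (0 : ℝ) 1)
    (v : ℝ) (hv : v = Real.sqrt (2 * ∫ ξ in (0 : ℝ)..L, ξ * g ξ)) (hvL : v ≤ L)
    (u : ℝ) (hu : u ∈ Set.Icc (-L) L) :
    BLN u v ↔
      ∃ h : ℝ → ℝ, Measurable h ∧
        (∀ ξ ∈ Set.Ioo (-L) (0 : ℝ), h ξ ∈ Set.Icc (-1 : ℝ) 0) ∧
        (∀ ξ ∈ Set.Icc (-L) L,
          0 ≤ ∫ ζ in (-L)..ξ,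
            ζ * (Mfun u ζ - (if 0 < ζ then g ζ else 0) - (if ζ < 0 then h ζ else 0))) ∧
        (∫ ζ in (-L)..L,
          ζ * (Mfun u ζ - (if 0 < ζ then g ζ else 0) - (if ζ < 0 then h ζ else 0))) = 0 := by
  have hv0 : 0 ≤ v := hv ▸ Real.sqrt_nonneg _
  have hg0 : 0 ≤ ∫ ξ in (0 : ℝ)..L, ξ * g ξ :=
    integral_nonneg_open hL.le fun x hx => mul_nonneg hx.1.le (hg01 x hx).1
  have hg2 : ∫ ξ in (0 : ℝ)..L, ξ * g ξ = v ^ 2 / 2 := by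
    rw [hv, Real.sq_sqrt (by positivity)]
    ring
  rw [BLN_iff hv0]
  change _ ↔ ∃ h : ℝ → ℝ, Measurable h ∧ (∀ ξ ∈ Ioo (-L) (0 : ℝ), h ξ ∈ Icc (-1 : ℝ) 0) ∧
    (∀ ξ ∈ Icc (-L) L, 0 ≤ ∫ ζ in (-L)..ξ, integrand u g h ζ) ∧
    ∫ ζ in (-L)..L, integrand u g h ζ = 0
  constructor
  · rintro (rfl | huv)
    · have hh : ∀ ξ ∈ Ioo (-L) (0 : ℝ), (fun _ => 0 : ℝ → ℝ) ξ ∈ Icc (-1 : ℝ) 0 := by simp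
      have ht : ∫ ζ in (-L)..L, integrand u g (fun _ => 0) ζ = 0 := by
        rw [total_moment hL hu hgm hg01 measurable_const hh, hg2, min_eq_right hv0,
          max_eq_left hv0]
        simp
      refine ⟨fun _ => 0, measurable_const, hh, ?_, ht⟩
      refine primitive_nonneg (c := u)
        (integrable_integrand hL hgm hg01 measurable_const hh) ?_ ?_ ht
      · rintro x ⟨hx1, hx2⟩
        rcases lt_or_ge 0 x with h0 | h0
        · have := (hg01 x ⟨h0, by linarith⟩).2
          simp only [integrand, Mfun, h0, hx2, and_self, if_true, ite_self, sub_zero]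
          exact mul_nonneg h0.le (by linarith)
        · simp [integrand, Mfun, h0.not_gt, show ¬ u < x by linarith]
      · rintro x ⟨hx1, hx2⟩
        have h0 : 0 < x := by linarith
        have := (hg01 x ⟨h0, hx2⟩).1
        simp only [integrand, Mfun, h0, hx1.not_gt, h0.not_gt, and_false, if_true, if_false,
          ite_self, sub_zero]
        exact mul_nonpos_of_nonneg_of_nonpos h0.le (by linarith)
    · have hu0 : u ≤ 0 := by linarith
      have hhm : Measurable fun x => Mfun u x - Mfun (-v) x :=
        (measurable_Mfun u).sub (measurable_Mfun (-v))
      have hh : ∀ ξ ∈ Ioo (-L) (0 : ℝ),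
          (fun x => Mfun u x - Mfun (-v) x) ξ ∈ Icc (-1 : ℝ) 0 := by
        rintro x ⟨hx1, hx2⟩
        simp only [Mfun, hx2, hx2.not_gt, false_and, and_true, if_false]
        split_ifs <;> first | (exfalso; linarith) | norm_num
      have ht : ∫ ζ in (-L)..L, integrand u g (fun x => Mfun u x - Mfun (-v) x) ζ = 0 := by
        rw [total_moment hL hu hgm hg01 hhm hh, hg2]
        simp only [mul_sub]
        rw [intervalIntegral.integral_sub (intervalIntegrable_Mfun u (by linarith))
          (intervalIntegrable_Mfun (-v) (by linarith)), moment_Mfun_neg hL hu.1,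
          moment_Mfun_neg hL (by linarith), min_eq_left hu0, max_eq_right hu0,
          min_eq_left (by linarith)]
        ring
      refine ⟨_, hhm, hh, ?_, ht⟩
      refine primitive_nonneg (c := 0)
        (integrable_integrand hL hgm hg01 hhm hh) ?_ ?_ ht
      · rintro x ⟨hx1, hx2⟩
        simp only [integrand, Mfun, hx2, hx2.not_gt, false_and, and_true, if_false, if_true]
        split_ifs <;> linarith
      · rintro x ⟨hx1, hx2⟩
        have := (hg01 x ⟨hx1, hx2⟩).1
        simp only [integrand, Mfun, hx1, hx1.not_gt, and_false, true_and,
          show ¬ x < u by linarith, if_true, if_false]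
        exact mul_nonpos_of_nonneg_of_nonpos hx1.le (by linarith)
  · rintro ⟨h, hhm, hh, hm, ht⟩
    have hH : 0 ≤ ∫ x in (-L)..0, x * h x := integral_nonneg_open (by linarith) fun x hx =>
      mul_nonneg_of_nonpos_of_nonpos hx.2.le (hh x hx).2
    have hm0 := hm 0 ⟨by linarith, hL.le⟩
    rw [left_moment hL hu.1 hhm hh] at hm0
    rw [total_moment hL hu hgm hg01 hhm hh, hg2] at ht
    rcases le_or_gt 0 u with h0 | h0
    · left
      rw [min_eq_right h0] at hm0 ht
      rw [max_eq_left h0] at ht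
      exact (sq_eq_sq₀ h0 hv0).1 (by linarith)
    · right
      rw [min_eq_left h0.le, max_eq_right h0.le] at ht
      by_contra! hc
      nlinarith
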